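/- Let C be a model category, I a set, and suppose C has coproducts indexed by I. Let (A_i)_{i ∈ I} be a family of cofibrant objects of C, and let γ : C ⟶ Ho(C) denote the localization functor at the weak equivalences. Then γ(∐_{i ∈ I} A_i), together with the images under γ of the coproduct inclusions A_i ⟶ ∐_{i ∈ I} A_i, is a coproduct of the family (γ(A_i))_{i ∈ I} in Ho(C). -/

import Mathlib

open CategoryTheory CategoryTheory.Limits

universe v u

/-- `f` is a retract of `g` in the arrow category. -/
def IsRetractOf {C : Type u} [Category.{v} C] {X Y X' Y' : C}
    (f : X ⟶ Y) (g : X' ⟶ Y') : Prop :=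
  ∃ (iX : X ⟶ X') (rX : X' ⟶ X) (iY : Y ⟶ Y') (rY : Y' ⟶ Y),
    iX ≫ rX = 𝟙 X ∧ iY ≫ rY = 𝟙 Y ∧ iX ≫ g = f ≫ iY ∧ g ≫ rY = rX ≫ f

/-- A (Quillen closed) model structure on a finitely bicomplete category `C`: classes of
weak equivalences, fibrations and cofibrations satisfying the two-out-of-three axiom,
closure under retracts, the lifting axioms and the factorization axioms. -/
structure ModelStructure (C : Type u) [Category.{v} C]
    [HasFiniteLimits C] [HasFiniteColimits C] where
  /-- weak equivalences -/
  W : MorphismProperty C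
  /-- fibrations -/
  Fib : MorphismProperty C
  /-- cofibrations -/
  Cof : MorphismProperty C
  W_comp : ∀ {X Y Z : C} (f : X ⟶ Y) (g : Y ⟶ Z), W f → W g → W (f ≫ g)
  W_cancel_left : ∀ {X Y Z : C} (f : X ⟶ Y) (g : Y ⟶ Z), W f → W (f ≫ g) → W g
  W_cancel_right : ∀ {X Y Z : C} (f : X ⟶ Y) (g : Y ⟶ Z), W g → W (f ≫ g) → W f
  W_retract : ∀ {X Y X' Y' : C} (f : X ⟶ Y) (g : X' ⟶ Y'), IsRetractOf f g → W g → W f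
  Fib_retract : ∀ {X Y X' Y' : C} (f : X ⟶ Y) (g : X' ⟶ Y'), IsRetractOf f g → Fib g → Fib f
  Cof_retract : ∀ {X Y X' Y' : C} (f : X ⟶ Y) (g : X' ⟶ Y'), IsRetractOf f g → Cof g → Cof f
  lift_cof_trivFib : ∀ {A B X Y : C} (i : A ⟶ B) (p : X ⟶ Y),
    Cof i → Fib p → W p → HasLiftingProperty i p
  lift_trivCof_fib : ∀ {A B X Y : C} (i : A ⟶ B) (p : X ⟶ Y),
    Cof i → W i → Fib p → HasLiftingProperty i p
  factor_cof_trivFib : ∀ {X Y : C} (f : X ⟶ Y),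
    ∃ (Z : C) (i : X ⟶ Z) (p : Z ⟶ Y), Cof i ∧ Fib p ∧ W p ∧ i ≫ p = f
  factor_trivCof_fib : ∀ {X Y : C} (f : X ⟶ Y),
    ∃ (Z : C) (i : X ⟶ Z) (p : Z ⟶ Y), Cof i ∧ W i ∧ Fib p ∧ i ≫ p = f

namespace ModelStructure

variable {C : Type u} [Category.{v} C] [HasFiniteLimits C] [HasFiniteColimits C]

/-- An object is fibrant if the map to the terminal object is a fibration. -/
def Fibrant (M : ModelStructure C) (X : C) : Prop := M.Fib (terminal.from X)

/-- An object is cofibrant if the map from the initial object is a cofibration. -/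
def Cofibrant (M : ModelStructure C) (X : C) : Prop := M.Cof (initial.to X)

end ModelStructure

universe w

open HomotopicalAlgebra in
/-- The Mathlib model category attached to a `ModelStructure`. -/
@[reducible]
def ModelStructure.toModelCategory {C : Type u} [Category.{v} C] [HasFiniteLimits C]
    [HasFiniteColimits C] (M : ModelStructure C) : ModelCategory C :=
  letI : CategoryWithFibrations C := ⟨M.Fib⟩
  letI : CategoryWithCofibrations C := ⟨M.Cof⟩
  letI : CategoryWithWeakEquivalences C := ⟨M.W⟩
  { categoryWithFibrations := ⟨M.Fib⟩
    categoryWithCofibrations := ⟨M.Cof⟩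
    categoryWithWeakEquivalences := ⟨M.W⟩
    cm2 :=
      { comp_mem := fun f g hf hg => M.W_comp f g hf hg
        of_postcomp := fun f g hg hfg => M.W_cancel_right f g hg hfg
        of_precomp := fun f g hf hfg => M.W_cancel_left f g hf hfg }
    cm3a := ⟨fun {X Y Z T f g} h hg => M.W_retract f g
      ⟨h.i.left, h.r.left, h.i.right, h.r.right, h.retract_left, h.retract_right, h.i_w,
        h.r_w.symm⟩ hg⟩
    cm3b := ⟨fun {X Y Z T f g} h hg => M.Fib_retract f g
      ⟨h.i.left, h.r.left, h.i.right, h.r.right, h.retract_left, h.retract_right, h.i_w,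
        h.r_w.symm⟩ hg⟩
    cm3c := ⟨fun {X Y Z T f g} h hg => M.Cof_retract f g
      ⟨h.i.left, h.r.left, h.i.right, h.r.right, h.retract_left, h.retract_right, h.i_w,
        h.r_w.symm⟩ hg⟩
    cm4a := fun i p hi hi' hp => M.lift_trivCof_fib i p hi.mem hi'.mem hp.mem
    cm4b := fun i p hi hp hp' => M.lift_cof_trivFib i p hi.mem hp.mem hp'.mem
    cm5a := ⟨fun f => by
      obtain ⟨Z, i, p, h1, h2, h3, h4⟩ := M.factor_trivCof_fib f
      exact ⟨⟨Z, i, p, h4, ⟨h1, h2⟩, h3⟩⟩⟩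
    cm5b := ⟨fun f => by
      obtain ⟨Z, i, p, h1, h2, h3, h4⟩ := M.factor_cof_trivFib f
      exact ⟨⟨Z, i, p, h4, h1, ⟨h2, h3⟩⟩⟩⟩ }

namespace HomotopicalAlgebra

lemma isCofibrant_sigma {C : Type u} [Category.{v} C] [ModelCategory C]
    {I : Type w} [HasCoproductsOfShape I C] (A : I → C) [hA : ∀ i, IsCofibrant (A i)] :
    IsCofibrant (∐ A) := by
  rw [isCofibrant_iff, cofibration_iff, ← trivialFibrations_llp]
  intro X Y p hp
  obtain ⟨_, _⟩ := (mem_trivialFibrations_iff p).1 hp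
  refine ⟨fun {f g} sq => ⟨⟨?_⟩⟩⟩
  have sq' (i : I) : CommSq (initial.to X) (initial.to (A i)) p (Sigma.ι A i ≫ g) :=
    ⟨Subsingleton.elim _ _⟩
  exact
    { l := Sigma.desc fun i => (sq' i).lift
      fac_left := Subsingleton.elim _ _
      fac_right := by
        apply Sigma.hom_ext
        intro i
        simp }

lemma cofan_aux {C : Type u} [Category.{v} C] [ModelCategory C]
    {I : Type w} [HasCoproductsOfShape I C] (A : I → C) [hA : ∀ i, IsCofibrant (A i)]
    {H : Type*} [Category* H] (L : C ⥤ H) [L.IsLocalization (weakEquivalences C)] (T : H) :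
    Function.Bijective
      (fun (f : L.obj (∐ A) ⟶ T) (i : I) => L.map (Sigma.ι A i) ≫ f) := by
  have := Localization.essSurj L (weakEquivalences C)
  obtain ⟨Y, i, _, _, _, ⟨e⟩⟩ : ∃ (Y : C) (i : L.objPreimage T ⟶ Y), Cofibration i ∧
      WeakEquivalence i ∧ IsFibrant Y ∧ Nonempty (L.obj Y ≅ T) := by
    let i := FibrantObject.HoCat.iResolutionObj (L.objPreimage T)
    have := Localization.inverts L (weakEquivalences _) i (mem_weakEquivalences i)
    exact ⟨_, i, inferInstance, inferInstance, inferInstance,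
      ⟨(asIso (L.map i)).symm ≪≫ L.objObjPreimageIso T⟩⟩
  have := isCofibrant_sigma A
  constructor
  · intro f g hfg
    obtain ⟨f', hf'⟩ := map_surjective_of_isLocalization L (∐ A) Y (f ≫ e.inv)
    obtain ⟨g', hg'⟩ := map_surjective_of_isLocalization L (∐ A) Y (g ≫ e.inv)
    rw [← cancel_mono e.inv, ← hf', ← hg']
    rw [← RightHomotopyRel.iff_map_eq]
    obtain ⟨P, _⟩ := PathObject.exists_very_good Y
    have h (i : I) : P.RightHomotopy (Sigma.ι A i ≫ f') (Sigma.ι A i ≫ g') := by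
      apply LeftHomotopyRel.rightHomotopy
      rw [LeftHomotopyRel.iff_map_eq L, L.map_comp, L.map_comp, hf', hg']
      have := congr_fun hfg i
      dsimp at this
      rw [reassoc_of% this]
    refine ⟨P, ⟨{ h := Sigma.desc fun i => (h i).h, h₀ := ?_, h₁ := ?_ }⟩⟩
    · apply Sigma.hom_ext
      intro i
      simp
    · apply Sigma.hom_ext
      intro i
      simp
  · intro f
    choose g hg using fun i => map_surjective_of_isLocalization L (A i) Y (f i ≫ e.inv)
    refine ⟨L.map (Sigma.desc g) ≫ e.hom, ?_⟩
    ext i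
    dsimp
    rw [← L.map_comp_assoc, Sigma.ι_desc, hg]
    simp

end HomotopicalAlgebra

/-- In a model category `C` with coproducts indexed by `I`, for a family of
cofibrant objects `A i`, the image of `∐ A` under the localization functor `γ : C ⥤ Ho(C)`,
together with the images of the coproduct inclusions, is a coproduct of the `γ(A i)` in
`Ho(C)`. -/
theorem stmt_6 {C : Type u} [Category.{v} C] [HasFiniteLimits C] [HasFiniteColimits C]
    (M : ModelStructure C) {I : Type w} [HasCoproductsOfShape I C]
    (A : I → C) (hA : ∀ i, M.Cofibrant (A i)) :
    Nonempty (IsColimit (Cofan.mk (M.W.Q.obj (∐ A)) (fun i => M.W.Q.map (Sigma.ι A i)))) := by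
  letI := M.toModelCategory
  have hA' (i : I) : HomotopicalAlgebra.IsCofibrant (A i) := ⟨hA i⟩
  have hL : M.W.Q.IsLocalization (HomotopicalAlgebra.weakEquivalences C) :=
    inferInstanceAs (M.W.Q.IsLocalization M.W)
  have key := fun T => HomotopicalAlgebra.cofan_aux A M.W.Q T
  refine ⟨Cofan.IsColimit.mk _ (fun t => ((key t.pt).2 t.inj).choose) (fun t i => ?_)
    (fun t m hm => ?_)⟩
  · exact congr_fun ((key t.pt).2 t.inj).choose_spec i
  · apply (key t.pt).1
    refine Eq.trans ?_ ((key t.pt).2 t.inj).choose_spec.symm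
    funext i
    exact hm i
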